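/- Let x, x̃ ∈ ℝ^d be unit vectors, let κ(x, x̃) = (xᵀx̃)·(π − arccos(xᵀx̃))/(2π) be the ReLU neural tangent kernel, let m ≥ 1 be an integer and ν > 0. Under the m-fold product of the standard Gaussian measure γ_d (i.e. w_1, …, w_m i.i.d. N(0, I_d)), with probability at least 1 − 2·e^{−ν} the random-feature kernel estimate satisfies |(1/m)·Σ_{k=1}^m 𝟙{w_kᵀx > 0}·𝟙{w_kᵀx̃ > 0}·(xᵀx̃) − κ(x, x̃)| ≤ √(ν/(2m)). -/

import Mathlib

open MeasureTheory ProbabilityTheory Real Finset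

open scoped RealInnerProductSpace

/-!
The estimator is `⟪x, x̃⟫` times the fraction of the weights `w_k` lying in the wedge
`{w | 0 < ⟪w, x⟫ ∧ 0 < ⟪w, x̃⟫}`. Since `|⟪x, x̃⟫| ≤ 1`, Hoeffding's inequality for this fraction
gives the bound once the Gaussian mass of the wedge is known. The joint law of `⟪x, w⟫` and
`⟪x̃, w⟫` depends only on the Gram matrix of `x` and `x̃`, so they may be replaced by `1` and
`exp (iθ)` in `ℂ`, where `θ` is the angle between them. There the wedge is a sector of opening
`π - θ`, and the argument of a rotation-invariant random point is uniform.
-/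

section Hoeffding

variable {Ω : Type*} [MeasurableSpace Ω] {μ : Measure Ω} {X : Ω → ℝ}

lemma measureReal_le_abs_le_of_hasSubgaussianMGF [IsFiniteMeasure μ] {c : NNReal}
    (hX : HasSubgaussianMGF X c μ) {ε : ℝ} (hε : 0 ≤ ε) :
    μ.real {ω | ε ≤ |X ω|} ≤ 2 * exp (-ε ^ 2 / (2 * c)) :=
  calc
    μ.real {ω | ε ≤ |X ω|} ≤ μ.real ({ω | ε ≤ X ω} ∪ {ω | ε ≤ (-X) ω}) :=
      measureReal_mono fun ω (h : ε ≤ |X ω|) => le_abs.1 h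
    _ ≤ μ.real {ω | ε ≤ X ω} + μ.real {ω | ε ≤ (-X) ω} := measureReal_union_le _ _
    _ ≤ exp (-ε ^ 2 / (2 * c)) + exp (-ε ^ 2 / (2 * c)) :=
      add_le_add (hX.measure_ge_le hε) (hX.neg.measure_ge_le hε)
    _ = 2 * exp (-ε ^ 2 / (2 * c)) := (two_mul _).symm

variable [IsProbabilityMeasure μ] {ι : Type*} [Fintype ι] {a b : ℝ}

lemma hasSubgaussianMGF_pi_sum_sub_integral (hX : AEMeasurable X μ)
    (hab : ∀ᵐ ω ∂μ, X ω ∈ Set.Icc a b) :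
    HasSubgaussianMGF (fun ω : ι → Ω => ∑ k, (X (ω k) - μ[X]))
      (Fintype.card ι * (‖b - a‖₊ / 2) ^ 2) (Measure.pi fun _ => μ) := by
  have h_indep : iIndepFun (fun (k : ι) (ω : ι → Ω) => X (ω k) - μ[X]) (Measure.pi fun _ => μ) :=
    iIndepFun_pi fun _ => hX.sub_const _
  have h_eval (k : ι) : HasSubgaussianMGF (fun ω : ι → Ω => X (ω k) - μ[X])
      ((‖b - a‖₊ / 2) ^ 2) (Measure.pi fun _ => μ) := by
    have h_map := measurePreserving_eval (fun _ : ι => μ) k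
    refine .of_map (X := fun ω => X ω - μ[X]) h_map.aemeasurable ?_
    rw [h_map.map_eq]
    exact hasSubgaussianMGF_of_mem_Icc hX hab
  simpa using HasSubgaussianMGF.sum_of_iIndepFun h_indep (s := univ) fun k _ => h_eval k

theorem measureReal_pi_le_abs_average_sub_integral_le [Nonempty ι] (hX : AEMeasurable X μ)
    (hab : ∀ᵐ ω ∂μ, X ω ∈ Set.Icc a b) {ε : ℝ} (hε : 0 ≤ ε) :
    (Measure.pi fun _ : ι => μ).real
        {ω | ε ≤ |1 / (Fintype.card ι : ℝ) * ∑ k, X (ω k) - μ[X]|}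
      ≤ 2 * exp (-2 * Fintype.card ι * ε ^ 2 / (b - a) ^ 2) := by
  set n : ℝ := (Fintype.card ι : ℝ) with hn
  have hn_pos : 0 < n := Nat.cast_pos.2 Fintype.card_pos
  have h_sum (ω : ι → Ω) :
      |∑ k, (X (ω k) - μ[X])| = n * |1 / n * ∑ k, X (ω k) - μ[X]| := by
    rw [← abs_of_pos hn_pos, ← abs_mul, abs_of_pos hn_pos, sum_sub_distrib, sum_const, card_univ,
      nsmul_eq_mul, ← hn]
    congr 1
    field_simp
  have h_tail := measureReal_le_abs_le_of_hasSubgaussianMGF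
    (hasSubgaussianMGF_pi_sum_sub_integral (ι := ι) hX hab) (mul_nonneg hn_pos.le hε)
  simp only [h_sum, mul_le_mul_iff_right₀ hn_pos] at h_tail
  refine h_tail.trans_eq ?_
  congr 2
  simp only [NNReal.coe_mul, NNReal.coe_natCast, ← hn, NNReal.coe_pow, NNReal.coe_div, coe_nnnorm,
    NNReal.coe_ofNat, div_pow, norm_eq_abs, sq_abs]
  rcases eq_or_ne (b - a) 0 with h | h
  · simp [h]
  · field_simp

theorem ofReal_one_sub_le_pi_abs_average_sub_integral_le [Nonempty ι] (hX : AEMeasurable X μ)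
    (hab : ∀ᵐ ω ∂μ, X ω ∈ Set.Icc a b) (h_lt : a < b) {ν : ℝ} (hν : 0 ≤ ν) :
    ENNReal.ofReal (1 - 2 * exp (-ν)) ≤ (Measure.pi fun _ : ι => μ)
      {ω | |1 / (Fintype.card ι : ℝ) * ∑ k, X (ω k) - μ[X]|
        ≤ (b - a) * √(ν / (2 * Fintype.card ι))} := by
  set P := Measure.pi fun _ : ι => μ
  set ε := (b - a) * √(ν / (2 * Fintype.card ι)) with hε
  set G := {ω : ι → Ω | |1 / (Fintype.card ι : ℝ) * ∑ k, X (ω k) - μ[X]| ≤ ε}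
  have hba : 0 < b - a := sub_pos.2 h_lt
  have h_exponent : -2 * Fintype.card ι * ε ^ 2 / (b - a) ^ 2 = -ν := by
    have : (Fintype.card ι : ℝ) ≠ 0 := Nat.cast_ne_zero.2 Fintype.card_ne_zero
    rw [hε, mul_pow, sq_sqrt (by positivity)]
    field_simp
  have h_compl : P.real Gᶜ ≤ 2 * exp (-ν) := by
    rw [← h_exponent]
    exact (measureReal_mono fun ω (h : ¬_ ≤ ε) => (not_le.1 h).le).trans
      (measureReal_pi_le_abs_average_sub_integral_le hX hab (by positivity))
  have h_univ : 1 ≤ P.real G + P.real Gᶜ := by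
    simpa using measureReal_union_le (μ := P) G Gᶜ
  rw [← ofReal_measureReal]
  exact ENNReal.ofReal_le_ofReal (by linarith)

theorem ofReal_one_sub_le_pi_abs_average_indicator_sub_le [Nonempty ι] {A : Set Ω}
    (hA : MeasurableSet A) {ν : ℝ} (hν : 0 ≤ ν) :
    ENNReal.ofReal (1 - 2 * exp (-ν)) ≤ (Measure.pi fun _ : ι => μ)
      {ω | |1 / (Fintype.card ι : ℝ) * ∑ k, A.indicator 1 (ω k) - μ.real A|
        ≤ √(ν / (2 * Fintype.card ι))} := by
  have h_mem (ω : Ω) : A.indicator (1 : Ω → ℝ) ω ∈ Set.Icc 0 1 :=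
    ⟨Set.indicator_nonneg (fun _ _ => zero_le_one) ω,
      Set.indicator_le_self' (fun _ _ => zero_le_one) ω⟩
  simpa only [integral_indicator_one hA, sub_zero, one_mul] using
    ofReal_one_sub_le_pi_abs_average_sub_integral_le (ι := ι)
      (measurable_one.indicator hA).aemeasurable (ae_of_all μ h_mem) zero_lt_one hν

end Hoeffding

section Gram

variable {E F : Type*} [NormedAddCommGroup E] [InnerProductSpace ℝ E] [FiniteDimensional ℝ E]
  [MeasurableSpace E] [BorelSpace E] [NormedAddCommGroup F] [InnerProductSpace ℝ F]
  [FiniteDimensional ℝ F] [MeasurableSpace F] [BorelSpace F] {ι : Type*}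

lemma charFun_map_inner_stdGaussian [Fintype ι] (x : ι → E) (t : EuclideanSpace ℝ ι) :
    charFun ((stdGaussian E).map fun w => WithLp.toLp 2 fun i => ⟪x i, w⟫) t
      = Complex.exp (-‖∑ i, t i • x i‖ ^ 2 / 2) := by
  rw [← charFun_stdGaussian, charFun_apply, charFun_apply, integral_map (by fun_prop) (by fun_prop)]
  simp [PiLp.inner_apply, inner_sum, real_inner_smul_right, real_inner_comm]

lemma map_inner_stdGaussian_congr [Finite ι] {x : ι → E} {y : ι → F}
    (hxy : Matrix.gram ℝ x = Matrix.gram ℝ y) :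
    (stdGaussian E).map (fun w => WithLp.toLp 2 fun i => ⟪x i, w⟫)
      = (stdGaussian F).map (fun w => WithLp.toLp 2 fun i => ⟪y i, w⟫) := by
  cases nonempty_fintype ι
  have h_norm (t : EuclideanSpace ℝ ι) : ‖∑ i, t i • x i‖ ^ 2 = ‖∑ i, t i • y i‖ ^ 2 := by
    have h_inner (i j : ι) : ⟪x i, x j⟫ = ⟪y i, y j⟫ := congr($hxy i j)
    simp only [← real_inner_self_eq_norm_sq, sum_inner, inner_sum, real_inner_smul_left,
      real_inner_smul_right, h_inner]
  refine Measure.ext_of_charFun (funext fun t => ?_)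
  simp only [charFun_map_inner_stdGaussian, ← Complex.ofReal_pow, h_norm]

lemma stdGaussian_singleton [Nontrivial E] (x : E) : stdGaussian E {x} = 0 := by
  obtain ⟨v, hv⟩ := exists_ne (0 : E)
  have h_var : Var[innerSL ℝ v; stdGaussian E] ≠ 0 := by
    rw [variance_dual_stdGaussian, innerSL_apply_norm]
    exact pow_ne_zero 2 (norm_ne_zero_iff.2 hv)
  have h_ne_dirac (y : E) : stdGaussian E ≠ .dirac y := fun h => h_var (by rw [h, variance_dirac])
  have := IsGaussian.nullSingletonClass h_ne_dirac
  exact measure_singleton x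

end Gram

section Arg

lemma measurable_coe_equivIoc (T a : ℝ) [Fact (0 < T)] :
    Measurable fun θ : AddCircle T => (AddCircle.equivIoc T a θ : ℝ) :=
  measurable_subtype_coe.comp (AddCircle.measurableEquivIoc T a).measurable

lemma map_equivIoc_haarAddCircle (T a : ℝ) [Fact (0 < T)] :
    AddCircle.haarAddCircle.map (fun θ : AddCircle T => (AddCircle.equivIoc T a θ : ℝ))
      = volume[|Set.Ioc a (a + T)] := by
  have hT : 0 < T := Fact.out
  have h_vol : (volume : Measure (AddCircle T)).map (fun θ => (AddCircle.equivIoc T a θ : ℝ))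
      = volume.restrict (Set.Ioc a (a + T)) := by
    have h_pres := AddCircle.measurePreserving_equivIoc T (a := a)
    rw [← map_comap_subtype_coe measurableSet_Ioc, ← h_pres.map_eq,
      Measure.map_map measurable_subtype_coe h_pres.measurable]
    rfl
  have h_haar : (AddCircle.haarAddCircle : Measure (AddCircle T))
      = (ENNReal.ofReal T)⁻¹ • volume := by
    rw [AddCircle.volume_eq_smul_haarAddCircle, smul_smul, ENNReal.inv_mul_cancel
      (ENNReal.ofReal_pos.2 hT).ne' ENNReal.ofReal_ne_top, one_smul]
  rw [h_haar, Measure.map_smul, h_vol, ProbabilityTheory.cond, Real.volume_Ioc, add_sub_cancel_left]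

lemma measurable_coe_arg (T : ℝ) : Measurable fun z : ℂ => (z.arg : AddCircle T) :=
  AddCircle.measurable_mk'.comp Complex.measurable_arg

local instance : Fact (0 < 2 * π) := ⟨two_pi_pos⟩

lemma coe_arg_rotation (θ : AddCircle (2 * π)) {z : ℂ} (hz : z ≠ 0) :
    ((rotation (Real.Angle.toCircle θ) z).arg : AddCircle (2 * π)) = θ + z.arg := by
  have h := Complex.arg_mul_coe_angle (Circle.coe_ne_zero (Real.Angle.toCircle θ)) hz
  exact h.trans (congrArg (· + _) (Real.Angle.arg_toCircle θ))

variable {μ : Measure ℂ} [IsProbabilityMeasure μ]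

lemma map_coe_arg_eq_haarAddCircle (h_rot : ∀ u : Circle, μ.map (rotation u) = μ)
    (h_zero : μ {0} = 0) :
    μ.map (fun z => (z.arg : AddCircle (2 * π))) = AddCircle.haarAddCircle := by
  have h_meas := measurable_coe_arg (2 * π)
  have h_inv : (μ.map fun z => (z.arg : AddCircle (2 * π))).IsAddLeftInvariant := by
    refine ⟨fun θ => ?_⟩
    conv_rhs => rw [← h_rot (Real.Angle.toCircle θ)]
    rw [Measure.map_map (by fun_prop) h_meas, Measure.map_map h_meas (by fun_prop)]
    refine Measure.map_congr ?_
    filter_upwards [measure_eq_zero_iff_ae_notMem.1 h_zero] with z hz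
    exact (coe_arg_rotation θ hz).symm
  have := Measure.isProbabilityMeasure_map (μ := μ) h_meas.aemeasurable
  rw [Measure.addHaarMeasure_unique (μ.map _) ⊤]
  simp [AddCircle.haarAddCircle]

theorem isUniform_arg_of_map_rotation_eq (h_rot : ∀ u : Circle, μ.map (rotation u) = μ)
    (h_zero : μ {0} = 0) : pdf.IsUniform Complex.arg (Set.Ioc (-π) π) μ := by
  have h_Ioc : -π + 2 * π = π := by ring
  have h_lift (z : ℂ) : (AddCircle.equivIoc (2 * π) (-π) z.arg : ℝ) = z.arg := by
    rw [AddCircle.equivIoc_coe_eq (h_Ioc.symm ▸ Complex.arg_mem_Ioc z)]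
  have h_map := map_equivIoc_haarAddCircle (2 * π) (-π)
  rw [← map_coe_arg_eq_haarAddCircle h_rot h_zero,
    Measure.map_map (measurable_coe_equivIoc _ _) (measurable_coe_arg _)] at h_map
  simp only [Function.comp_def, h_lift] at h_map
  rwa [h_Ioc] at h_map

end Arg

lemma inner_exp_mul_I_eq_norm_mul_cos_arg_sub (θ : ℝ) (z : ℂ) :
    ⟪Complex.exp (θ * Complex.I), z⟫ = ‖z‖ * cos (z.arg - θ) := by
  rw [Complex.inner, cos_sub, mul_add, ← mul_assoc, ← mul_assoc, Complex.norm_mul_cos_arg,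
    Complex.norm_mul_sin_arg]
  simp [Complex.exp_ofReal_mul_I_re, Complex.exp_ofReal_mul_I_im]

lemma cos_pos_iff_abs_lt_pi_div_two {t : ℝ} (ht : |t| ≤ π + π / 2) :
    0 < cos t ↔ |t| < π / 2 := by
  refine ⟨fun h => ?_, fun h => cos_pos_of_mem_Ioo (abs_lt.1 h)⟩
  contrapose! h
  rw [← cos_abs]
  exact cos_nonpos_of_pi_div_two_le_of_le h ht

lemma cos_pos_and_cos_sub_pos_iff {t θ : ℝ} (ht : t ∈ Set.Ioc (-π) π) (hθ : θ ∈ Set.Icc 0 π) :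
    0 < cos t ∧ 0 < cos (t - θ) ↔ t ∈ Set.Ioo (θ - π / 2) (π / 2) := by
  obtain ⟨ht_gt, ht_le⟩ := ht
  obtain ⟨hθ_nonneg, hθ_le⟩ := hθ
  have h_left : 0 < cos t ↔ |t| < π / 2 :=
    cos_pos_iff_abs_lt_pi_div_two (abs_le.2 ⟨by linarith, by linarith⟩)
  have h_right (h : |t| < π / 2) : 0 < cos (t - θ) ↔ |t - θ| < π / 2 :=
    cos_pos_iff_abs_lt_pi_div_two
      (abs_le.2 ⟨by linarith [neg_lt_of_abs_lt h], by linarith [lt_of_abs_lt h]⟩)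
  rw [h_left, and_congr_right h_right, abs_lt, abs_lt, Set.mem_Ioo]
  constructor <;> intro h <;> refine ⟨?_, ?_⟩ <;> grind

theorem measure_inner_one_pos_and_inner_exp_pos {μ : Measure ℂ} [IsProbabilityMeasure μ]
    (h_rot : ∀ u : Circle, μ.map (rotation u) = μ) (h_zero : μ {0} = 0) {θ : ℝ}
    (hθ : θ ∈ Set.Icc 0 π) :
    μ {z | 0 < ⟪1, z⟫ ∧ 0 < ⟪Complex.exp (θ * Complex.I), z⟫}
      = ENNReal.ofReal ((π - θ) / (2 * π)) := by
  have h_sector : {z : ℂ | 0 < ⟪1, z⟫ ∧ 0 < ⟪Complex.exp (θ * Complex.I), z⟫}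
      =ᵐ[μ] Complex.arg ⁻¹' Set.Ioo (θ - π / 2) (π / 2) := by
    refine Filter.eventuallyEq_set.2 ?_
    filter_upwards [measure_eq_zero_iff_ae_notMem.1 h_zero] with z hz
    have h_one := inner_exp_mul_I_eq_norm_mul_cos_arg_sub 0 z
    rw [Complex.ofReal_zero, zero_mul, Complex.exp_zero, sub_zero] at h_one
    rw [Set.mem_preimage, ← cos_pos_and_cos_sub_pos_iff (Complex.arg_mem_Ioc z) hθ]
    simp only [h_one, inner_exp_mul_I_eq_norm_mul_cos_arg_sub,
      mul_pos_iff_of_pos_left (norm_pos_iff.2 hz)]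
  have h_subset : Set.Ioo (θ - π / 2) (π / 2) ⊆ Set.Ioc (-π) π := fun t ht =>
    ⟨by linarith [ht.1, hθ.1, pi_pos], by linarith [ht.2, pi_pos]⟩
  rw [measure_congr h_sector,
    pdf.IsUniform.measure_preimage (by simp [pi_pos]) (by simp)
      (isUniform_arg_of_map_rotation_eq h_rot h_zero) measurableSet_Ioo,
    Set.inter_eq_right.2 h_subset, Real.volume_Ioo, Real.volume_Ioc,
    ← ENNReal.ofReal_div_of_pos (by linarith [pi_pos])]
  ring_nf

section Wedge

open InnerProductGeometry

variable {E : Type*} [NormedAddCommGroup E] [InnerProductSpace ℝ E]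

lemma gram_pair_eq_gram_norm_smul_exp_angle (x y : E) :
    Matrix.gram ℝ ![x, y]
      = Matrix.gram ℝ ![‖x‖ • (1 : ℂ), ‖y‖ • Complex.exp (angle x y * Complex.I)] := by
  have h_norm : ‖Complex.exp (angle x y * Complex.I)‖ = 1 := Complex.norm_exp_ofReal_mul_I _
  have h_inner : ⟪x, y⟫ = ‖x‖ * (‖y‖ * cos (angle x y)) := by
    rw [← cos_angle_mul_norm_mul_norm, mul_comm, mul_assoc]
  ext i j
  fin_cases i <;> fin_cases j <;>
    simp [Matrix.gram_apply, h_norm, h_inner, real_inner_comm x y, mul_comm ‖x‖]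

theorem stdGaussian_inner_pos_and_inner_pos [FiniteDimensional ℝ E] [MeasurableSpace E]
    [BorelSpace E] {x y : E} (hx : x ≠ 0) (hy : y ≠ 0) :
    stdGaussian E {w | 0 < ⟪x, w⟫ ∧ 0 < ⟪y, w⟫}
      = ENNReal.ofReal ((π - angle x y) / (2 * π)) := by
  have h_quadrant : MeasurableSet {v : EuclideanSpace ℝ (Fin 2) | 0 < v 0 ∧ 0 < v 1} := by
    measurability
  have h_law := congr($(map_inner_stdGaussian_congr
    (gram_pair_eq_gram_norm_smul_exp_angle x y)) {v | 0 < v 0 ∧ 0 < v 1})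
  rw [Measure.map_apply (by fun_prop) h_quadrant, Measure.map_apply (by fun_prop) h_quadrant]
    at h_law
  simp only [Set.preimage_ofPred_eq, Matrix.cons_val_zero, Matrix.cons_val_one,
    real_inner_smul_left, mul_pos_iff_of_pos_left (norm_pos_iff.2 hx),
    mul_pos_iff_of_pos_left (norm_pos_iff.2 hy)] at h_law
  rw [h_law]
  exact measure_inner_one_pos_and_inner_exp_pos (fun u => stdGaussian_map (rotation u))
    (stdGaussian_singleton 0) ⟨angle_nonneg x y, angle_le_pi x y⟩

theorem pi_gaussianReal_sum_mul_pos_and_sum_mul_pos {ι : Type*} [Fintype ι] {x y : ι → ℝ}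
    (hx : ∑ i, x i ^ 2 = 1) (hy : ∑ i, y i ^ 2 = 1) :
    (Measure.pi fun _ : ι => gaussianReal 0 1)
        {w | 0 < ∑ i, w i * x i ∧ 0 < ∑ i, w i * y i}
      = ENNReal.ofReal ((π - arccos (∑ i, x i * y i)) / (2 * π)) := by
  have h_norm {v : ι → ℝ} (hv : ∑ i, v i ^ 2 = 1) : ‖WithLp.toLp 2 v‖ = 1 := by
    simp [EuclideanSpace.norm_eq, hv]
  have h_angle : angle (WithLp.toLp 2 x) (WithLp.toLp 2 y) = arccos (∑ i, x i * y i) := by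
    simp [angle, h_norm hx, h_norm hy, PiLp.inner_apply, mul_comm]
  have h_wedge := stdGaussian_inner_pos_and_inner_pos
    (norm_ne_zero_iff.1 ((h_norm hx).trans_ne one_ne_zero))
    (norm_ne_zero_iff.1 ((h_norm hy).trans_ne one_ne_zero))
  rw [← map_pi_eq_stdGaussian, Measure.map_apply (by fun_prop) (by measurability), h_angle]
    at h_wedge
  simpa [PiLp.inner_apply] using h_wedge

end Wedge

/-- for unit vectors `x, x̃ ∈ ℝ^d`, the ReLU NTK
`κ(x, x̃) = (xᵀx̃)·(π − arccos(xᵀx̃))/(2π)`, an integer `m ≥ 1` and `ν > 0`, under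
`w_1, …, w_m` i.i.d. `N(0, I_d)`, with probability at least `1 − 2·e^{−ν}` the
random-feature kernel estimate satisfies
`|(1/m)·Σ_k 𝟙{w_kᵀx>0}·𝟙{w_kᵀx̃>0}·(xᵀx̃) − κ(x, x̃)| ≤ √(ν/(2m))`. -/
theorem random_feature_kernel_concentration
    (d m : ℕ) (hm : 1 ≤ m) (ν : ℝ) (hν : 0 < ν)
    (x xt : Fin d → ℝ)
    (hx : ∑ i, (x i) ^ 2 = 1) (hxt : ∑ i, (xt i) ^ 2 = 1) :
    (Measure.pi fun _ : Fin m => Measure.pi fun _ : Fin d => gaussianReal 0 1)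
        {W : Fin m → Fin d → ℝ |
          |(1 / (m : ℝ)) * ∑ k, (if 0 < ∑ i, W k i * x i then (1:ℝ) else 0)
              * (if 0 < ∑ i, W k i * xt i then (1:ℝ) else 0) * (∑ i, x i * xt i)
            - (∑ i, x i * xt i) * ((π - Real.arccos (∑ i, x i * xt i)) / (2 * π))|
          ≤ Real.sqrt (ν / (2 * m))}
      ≥ ENNReal.ofReal (1 - 2 * Real.exp (-ν)) := by
  set r := ∑ i, x i * xt i
  set γ := Measure.pi fun _ : Fin d => gaussianReal 0 1
  set A := {w : Fin d → ℝ | 0 < ∑ i, w i * x i ∧ 0 < ∑ i, w i * xt i}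
  have : Nonempty (Fin m) := ⟨⟨0, hm⟩⟩
  have hA : MeasurableSet A := by measurability
  have hr_le : |r| ≤ 1 := by
    rw [← sq_le_one_iff_abs_le_one]
    simpa [hx, hxt] using Finset.sum_mul_sq_le_sq_mul_sq univ x xt
  have h_prob : γ.real A = (π - arccos r) / (2 * π) := by
    rw [measureReal_def, pi_gaussianReal_sum_mul_pos_and_sum_mul_pos hx hxt]
    exact ENNReal.toReal_ofReal (div_nonneg (sub_nonneg.2 (arccos_le_pi r)) two_pi_pos.le)
  refine (ofReal_one_sub_le_pi_abs_average_indicator_sub_le hA hν.le).trans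
    (measure_mono fun W hW => ?_)
  have h_summand (k : Fin m) : (if 0 < ∑ i, W k i * x i then (1 : ℝ) else 0)
      * (if 0 < ∑ i, W k i * xt i then 1 else 0) * r = r * A.indicator 1 (W k) := by
    simp only [A, Set.indicator_apply, Set.mem_ofPred_eq, Pi.one_apply]
    grind
  rw [Set.mem_ofPred_eq, h_prob, Fintype.card_fin] at hW
  simp only [Set.mem_ofPred_eq, h_summand, ← mul_sum]
  rw [mul_left_comm, ← mul_sub, abs_mul]
  exact (mul_le_of_le_one_left (abs_nonneg _) hr_le).trans hW
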